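/- Let X be a geometric tree with at least one branch point (i.e., not homeomorphic to an interval) and T a generic cellular merge tree with n leaves. Then the constrained configuration space Conf(X,T) is nonempty and path-connected. -/

import Mathlib

open scoped Classical

noncomputable section

instance dartTop {V : Type*} (G : SimpleGraph V) : TopologicalSpace G.Dart := ⊥

/-- Gluing relation for the geometric realization of a graph: one copy of `[0,1]` per
oriented edge, opposite orientations identified by `t ↦ 1-t`, and starting points of edges
with the same initial vertex identified. -/
def treeRel {V : Type*} (G : SimpleGraph V) :
    (G.Dart × ↥(Set.Icc (0:ℝ) 1)) → (G.Dart × ↥(Set.Icc (0:ℝ) 1)) → Prop :=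
  fun p q =>
    (p.1 = q.1.symm ∧ (p.2 : ℝ) = 1 - (q.2 : ℝ)) ∨
    (p.1.toProd.1 = q.1.toProd.1 ∧ (p.2 : ℝ) = 0 ∧ (q.2 : ℝ) = 0)

/-- The geometric realization of a graph. -/
def TreeSpace {V : Type*} (G : SimpleGraph V) := Quot (treeRel G)

instance {V : Type*} (G : SimpleGraph V) : TopologicalSpace (TreeSpace G) :=
  instTopologicalSpaceQuot
/-- Combinatorial data for a cellular merge tree: a finite rooted tree with a real value at
each node, strictly increasing towards the root; the root carries an infinite upward ray. -/
structure MergeTreeData where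
  n : ℕ
  parent : Fin n → Fin n
  root : Fin n
  hroot : parent root = root
  hreach : ∀ v, ∃ k, parent^[k] v = root
  val : Fin n → ℝ
  hval : ∀ v, v ≠ root → val v < val (parent v)

namespace MergeTreeData

variable (d : MergeTreeData)

/-- Points of the edge attached below each node (for the root: the infinite upward ray). -/
def Carrier : Set (Fin d.n × ℝ) :=
  {p | d.val p.1 ≤ p.2 ∧ (p.1 ≠ d.root → p.2 ≤ d.val (d.parent p.1))}

/-- Glue the top of each edge to the bottom of the parent's edge. -/
def glueRel : ↥d.Carrier → ↥d.Carrier → Prop := fun a b =>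
  a.1.2 = b.1.2 ∧ d.parent a.1.1 = b.1.1 ∧ a.1.2 = d.val (d.parent a.1.1)

/-- The geometric realization of the cellular merge tree `d`. -/
def Space := Quot d.glueRel

instance : TopologicalSpace d.Space := instTopologicalSpaceQuot

/-- The gauge of the canonical cellular merge tree. -/
def gauge : d.Space → ℝ := Quot.lift (fun a => a.1.2) (fun _ _ h => h.1)

/-- `v` is a descendant of `w` (possibly `v = w`). -/
def Desc (v w : Fin d.n) : Prop := ∃ k, d.parent^[k] v = w

def IsLeafNode (v : Fin d.n) : Prop := ∀ w, d.parent w = v → w = v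

def IsBranchNode (v : Fin d.n) : Prop := 2 ≤ Nat.card {w : Fin d.n // d.parent w = v ∧ w ≠ v}

/-- Generic: binary (each node has zero or two children) and leaves take distinct values. -/
def Generic : Prop :=
  (∀ v, Nat.card {w : Fin d.n // d.parent w = v ∧ w ≠ v} = 0 ∨
        Nat.card {w : Fin d.n // d.parent w = v ∧ w ≠ v} = 2) ∧
  ∀ v w, d.IsLeafNode v → d.IsLeafNode w → v ≠ w → d.val v ≠ d.val w

/-- `a` is the least common ancestor of `u` and `w`. -/
def IsLCA (u w a : Fin d.n) : Prop :=
  d.Desc u a ∧ d.Desc w a ∧ ∀ b, d.Desc u b → d.Desc w b → d.Desc a b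

/-- The type of leaves. -/
def Leaf := {v : Fin d.n // d.IsLeafNode v}

end MergeTreeData

/-- Isomorphism of gauged spaces: a homeomorphism commuting with the gauges. -/
def GaugedIso {A B : Type*} [TopologicalSpace A] [TopologicalSpace B]
    (πA : A → ℝ) (πB : B → ℝ) : Prop :=
  ∃ e : A ≃ₜ B, ∀ x, πB (e x) = πA x

/-- A gauged space is a cellular merge tree if it is isomorphic (as a gauged space) to the
realization of some combinatorial merge tree data. -/
def IsCellularMergeTree {A : Type*} [TopologicalSpace A] (π : A → ℝ) : Prop :=
  ∃ d : MergeTreeData, GaugedIso d.gauge π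
/-- The convex hull of a subset of a tree: the intersection of all closed connected
(preconnected) supersets. -/
def ConvH {X : Type*} [TopologicalSpace X] (A : Set X) : Set X :=
  ⋂₀ {C : Set X | A ⊆ C ∧ IsClosed C ∧ IsPreconnected C}

/-- The hull `Conv(v)` associated to a node `v`: convex hull of the union of the sets
indexed by the leaves descendant from `v`. -/
def hullOf {X : Type*} [TopologicalSpace X] (d : MergeTreeData)
    (F : d.Leaf → Set X) (v : Fin d.n) : Set X :=
  ConvH (⋃ l : d.Leaf, if d.Desc l.1 v then F l else ∅)

/-- The hull-compatibility constraint defining the constrained configuration spaces: hulls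
of incomparable nodes are disjoint. -/
def HullCond {X : Type*} [TopologicalSpace X] (d : MergeTreeData) (F : d.Leaf → Set X) : Prop :=
  ∀ v w : Fin d.n, (hullOf d F v ∩ hullOf d F w).Nonempty → d.Desc v w ∨ d.Desc w v

/-- Membership in the constrained point configuration space `Conf(X,T)`. -/
def ConfCond {X : Type*} [TopologicalSpace X] (d : MergeTreeData) (x : d.Leaf → X) : Prop :=
  Function.Injective x ∧ HullCond d (fun l => ({x l} : Set X))

/-! ### Part 1: convex hulls and segments -/

section HullBasics

open Set Topology Function

variable {X : Type*} [TopologicalSpace X]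

/-- The segment between two points. -/
def tseg (a b : X) : Set X := ConvH {a, b}

theorem subset_ConvH (A : Set X) : A ⊆ ConvH A :=
  fun _ hx _ hC => hC.1 hx

theorem isClosed_ConvH (A : Set X) : IsClosed (ConvH A) :=
  isClosed_sInter fun _ hC => hC.2.1

theorem ConvH_min {A C : Set X} (h : A ⊆ C) (hc : IsClosed C) (hp : IsPreconnected C) :
    ConvH A ⊆ C := fun _ hx => hx C ⟨h, hc, hp⟩

theorem ConvH_subset_of_subset {A B : Set X} (h : A ⊆ ConvH B) : ConvH A ⊆ ConvH B :=
  fun _ hx C hC => hx C ⟨h.trans (ConvH_min hC.1 hC.2.1 hC.2.2), hC.2.1, hC.2.2⟩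

theorem ConvH_mono {A B : Set X} (h : A ⊆ B) : ConvH A ⊆ ConvH B :=
  ConvH_subset_of_subset (h.trans (subset_ConvH B))

theorem ConvH_empty : ConvH (∅ : Set X) = ∅ :=
  subset_empty_iff.1 (ConvH_min (Subset.refl _) isClosed_empty isPreconnected_empty)

theorem left_mem_tseg (a b : X) : a ∈ tseg a b := subset_ConvH _ (by simp)
theorem right_mem_tseg (a b : X) : b ∈ tseg a b := subset_ConvH _ (by simp)
theorem tseg_comm (a b : X) : tseg a b = tseg b a := by
  unfold tseg; rw [Set.pair_comm]

theorem tseg_min {a b : X} {C : Set X} (ha : a ∈ C) (hb : b ∈ C) (hc : IsClosed C)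
    (hp : IsPreconnected C) : tseg a b ⊆ C :=
  ConvH_min (by rintro x (rfl | rfl) <;> assumption) hc hp

theorem tseg_subset {a b : X} {A : Set X} (ha : a ∈ ConvH A) (hb : b ∈ ConvH A) :
    tseg a b ⊆ ConvH A :=
  ConvH_subset_of_subset (by rintro x (rfl | rfl) <;> assumption)

/-- Abstract dendrite-like spaces. -/
structure DendHyp (X : Type*) [TopologicalSpace X] : Prop where
  nb : ∀ (p : X), ∀ U ∈ 𝓝 p, ∃ B ∈ 𝓝 p, B ⊆ U ∧ IsClosed B ∧ IsPreconnected B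
  joined : ∀ a b : X, JoinedIn (tseg a b) a b
  anti : ∀ a b y : X, y ∈ tseg a b → a ∈ tseg y b → a = y

/-- The set of interior (cut) points. -/
def inner (X : Type*) [TopologicalSpace X] : Set X :=
  {p | ∃ a b : X, a ≠ p ∧ b ≠ p ∧ p ∈ tseg a b}

theorem ConvH_subsingleton [T1Space X] {A : Set X} {p : X} (h : A ⊆ {p}) : ConvH A ⊆ {p} :=
  ConvH_min h isClosed_singleton isPreconnected_singleton

theorem DendHyp.isPreconnected_tseg [T2Space X] (h : DendHyp X) (a b : X) :
    IsPreconnected (tseg a b) := by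
  obtain ⟨γ, hγ⟩ := h.joined a b
  have h1 : range γ ⊆ tseg a b := range_subset_iff.2 hγ
  have h2 : IsPreconnected (range γ) := isPreconnected_range γ.continuous
  have h3 : IsClosed (range γ) := (isCompact_range γ.continuous).isClosed
  have h4 : tseg a b ⊆ range γ :=
    tseg_min ⟨0, γ.source⟩ ⟨1, γ.target⟩ h3 h2
  rwa [h4.antisymm h1]

theorem DendHyp.isPreconnected_ConvH [T2Space X] (h : DendHyp X) {A : Set X} (hA : A.Finite) :
    IsPreconnected (ConvH A) := by
  rcases A.eq_empty_or_nonempty with rfl | ⟨a, ha⟩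
  · rw [ConvH_empty]; exact isPreconnected_empty
  · have hK : ConvH A = ⋃ x ∈ A, tseg a x := by
      apply Subset.antisymm
      · refine ConvH_min ?_ (hA.isClosed_biUnion fun x _ => isClosed_ConvH _) ?_
        · intro x hx
          exact mem_biUnion hx (right_mem_tseg a x)
        · rw [biUnion_eq_iUnion]
          refine isPreconnected_iUnion ⟨a, mem_iInter.2 fun x => left_mem_tseg a x⟩ ?_
          exact fun x => h.isPreconnected_tseg _ _
      · refine iUnion₂_subset fun x hx => tseg_subset ?_ ?_ <;>
        apply subset_ConvH <;> assumption
    rw [hK, biUnion_eq_iUnion]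
    refine isPreconnected_iUnion ⟨a, mem_iInter.2 fun x => left_mem_tseg a x⟩ ?_
    exact fun x => h.isPreconnected_tseg _ _

theorem DendHyp.tseg_subset_union [T2Space X] (h : DendHyp X) (a b c : X) :
    tseg a b ⊆ tseg a c ∪ tseg c b := by
  refine tseg_min (Or.inl (left_mem_tseg _ _)) (Or.inr (right_mem_tseg _ _))
    ((isClosed_ConvH _).union (isClosed_ConvH _)) ?_
  exact IsPreconnected.union c (right_mem_tseg _ _) (left_mem_tseg _ _)
    (h.isPreconnected_tseg _ _) (h.isPreconnected_tseg _ _)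

theorem DendHyp.anti' (h : DendHyp X) {a b y : X} (hy : y ∈ tseg a b) (hb : b ∈ tseg a y) :
    b = y := h.anti b a y (tseg_comm a b ▸ hy) (tseg_comm a y ▸ hb)

theorem tseg_subset_left {a b y : X} (hy : y ∈ tseg a b) : tseg a y ⊆ tseg a b :=
  tseg_subset (left_mem_tseg _ _) hy

theorem tseg_subset_right {a b y : X} (hy : y ∈ tseg a b) : tseg y b ⊆ tseg a b :=
  tseg_subset hy (right_mem_tseg _ _)

theorem tseg_subset_inner {a b : X} (ha : a ∈ inner X) (hb : b ∈ inner X) :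
    tseg a b ⊆ inner X := by
  intro p hp
  by_cases h1 : a = p
  · exact h1 ▸ ha
  by_cases h2 : b = p
  · exact h2 ▸ hb
  exact ⟨a, b, h1, h2, hp⟩

/-- Points on a segment close to one end. -/
theorem DendHyp.near [T2Space X] (h : DendHyp X) {p y : X} (hpy : p ≠ y) {U : Set X}
    (hU : U ∈ 𝓝 p) : ∃ z ∈ tseg p y, z ∈ U ∧ z ≠ p ∧ z ∈ inner X := by
  by_contra hcon
  push Not at hcon
  obtain ⟨O, hOU, hO, hpO⟩ := mem_nhds_iff.1 hU
  have hpre := h.isPreconnected_tseg p y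
  have hsub : tseg p y ⊆ (O \ {y}) ∪ {p}ᶜ := by
    intro z hz
    by_cases hzp : z = p
    · subst hzp; exact Or.inl ⟨hpO, hpy⟩
    · exact Or.inr hzp
  obtain ⟨z, hz, ⟨hzO, hzy⟩, hzp⟩ := hpre (O \ {y}) {p}ᶜ (hO.sdiff isClosed_singleton)
    isOpen_compl_singleton hsub ⟨p, left_mem_tseg _ _, hpO, hpy⟩
    ⟨y, right_mem_tseg _ _, fun hh => hpy hh.symm⟩
  exact hcon z hz (hOU hzO) hzp ⟨p, y, fun hh => hzp hh.symm, fun hh => hzy hh.symm, hz⟩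

theorem DendHyp.through [T2Space X] (h : DendHyp X) {p w : X} (hp : p ∈ inner X)
    (hw : w ≠ p) : ∃ a, a ≠ p ∧ p ∈ tseg w a := by
  obtain ⟨a, b, ha, hb, hab⟩ := hp
  rcases h.tseg_subset_union a b w hab with h1 | h1
  · exact ⟨a, ha, tseg_comm a w ▸ h1⟩
  · exact ⟨b, hb, h1⟩

/-- Shortening beyond `p`. -/
theorem DendHyp.shorten [T2Space X] (h : DendHyp X) {p w a z : X} (hpa : p ∈ tseg w a)
    (hz : z ∈ tseg p a) (hzp : z ≠ p) : p ∈ tseg w z := by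
  rcases h.tseg_subset_union w a z hpa with h1 | h1
  · exact h1
  · exact absurd (h.anti p a z hz h1).symm hzp

theorem DendHyp.through_near [T2Space X] (h : DendHyp X) {p w : X} (hp : p ∈ inner X)
    (hw : w ≠ p) {U : Set X} (hU : U ∈ 𝓝 p) :
    ∃ z ∈ U, z ≠ p ∧ z ∈ inner X ∧ p ∈ tseg w z := by
  obtain ⟨a, hap, ha⟩ := h.through hp hw
  obtain ⟨z, hz, hzU, hzp, hzi⟩ := h.near (Ne.symm hap) hU
  exact ⟨z, hzU, hzp, hzi, h.shorten ha hz hzp⟩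

/-- Triple branch point. -/
def IsTriple (b : X) : Prop := ∃ a₁ a₂ a₃ : X, a₁ ≠ b ∧ a₂ ≠ b ∧ a₃ ≠ b ∧
  b ∈ tseg a₁ a₂ ∧ b ∈ tseg a₁ a₃ ∧ b ∈ tseg a₂ a₃

theorem IsTriple.inner {b : X} (hb : IsTriple b) : b ∈ inner X := by
  obtain ⟨a₁, a₂, a₃, h1, h2, h3, h12, -⟩ := hb
  exact ⟨a₁, a₂, h1, h2, h12⟩

theorem DendHyp.third_near [T2Space X] (h : DendHyp X) {b : X} (hb : IsTriple b) (x x' : X)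
    {U : Set X} (hU : U ∈ 𝓝 b) :
    ∃ g ∈ U, g ≠ b ∧ g ∈ inner X ∧ b ∈ tseg x g ∧ b ∈ tseg x' g := by
  have key : ∃ a, a ≠ b ∧ b ∈ tseg x a ∧ b ∈ tseg x' a := by
    obtain ⟨a₁, a₂, a₃, h1, h2, h3, h12, h13, h23⟩ := hb
    have aux : ∀ y u v : X, b ∈ tseg u v → b ∈ tseg y u ∨ b ∈ tseg y v := by
      intro y u v huv
      rcases h.tseg_subset_union u v y huv with h' | h'
      · left; rwa [tseg_comm]
      · right; exact h'
    have e1 := aux x _ _ h12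
    have e2 := aux x _ _ h13
    have e3 := aux x _ _ h23
    have f1 := aux x' _ _ h12
    have f2 := aux x' _ _ h13
    have f3 := aux x' _ _ h23
    by_cases g1 : b ∈ tseg x a₁ ∧ b ∈ tseg x' a₁
    · exact ⟨a₁, h1, g1⟩
    by_cases g2 : b ∈ tseg x a₂ ∧ b ∈ tseg x' a₂
    · exact ⟨a₂, h2, g2⟩
    by_cases g3 : b ∈ tseg x a₃ ∧ b ∈ tseg x' a₃
    · exact ⟨a₃, h3, g3⟩
    exfalso; tauto
  obtain ⟨a, hab, hxa, hxa'⟩ := key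
  obtain ⟨z, hz, hzU, hzp, hzi⟩ := h.near (Ne.symm hab) hU
  exact ⟨z, hzU, hzp, hzi, h.shorten hxa hz hzp, h.shorten hxa' hz hzp⟩

/-- Pairs of distinct points of `P`. -/
def pairs (P : Set X) : Set (X × X) := {q | q.1 ∈ P ∧ q.2 ∈ P ∧ q.1 ≠ q.2}

/-- A set closed under segments. -/
def SegConvex (P : Set X) : Prop := ∀ a ∈ P, ∀ b ∈ P, tseg a b ⊆ P

theorem DendHyp.move_fst (h : DendHyp X) {P : Set X} (hP : SegConvex P) {w w' y : X}
    (hw : w ∈ P) (hw' : w' ∈ P) (hy : y ∈ P) (hn : y ∉ tseg w w') :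
    JoinedIn (pairs P) (w, y) (w', y) := by
  have := (h.joined w w').map (f := fun z => (z, y)) (by fun_prop)
  refine this.mono ?_
  rintro _ ⟨z, hz, rfl⟩
  exact ⟨hP _ hw _ hw' hz, hy, fun (hh : z = y) => hn (hh ▸ hz)⟩

theorem DendHyp.move_snd (h : DendHyp X) {P : Set X} (hP : SegConvex P) {w y y' : X}
    (hw : w ∈ P) (hy : y ∈ P) (hy' : y' ∈ P) (hn : w ∉ tseg y y') :
    JoinedIn (pairs P) (w, y) (w, y') := by
  have := (h.joined y y').map (f := fun z => (w, z)) (by fun_prop)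
  refine this.mono ?_
  rintro _ ⟨z, hz, rfl⟩
  exact ⟨hw, hP _ hy _ hy' hz, fun (hh : w = z) => hn (hh ▸ hz)⟩

variable [T2Space X]

theorem DendHyp.pair_a (h : DendHyp X) {P : Set X} (hP : SegConvex P) {p w y : X}
    (hPp : ∃ U ∈ 𝓝 p, U ∩ inner X ⊆ P) (hpi : p ∈ inner X)
    (hw : w ∈ P) (hy : y ∈ P) (hwy : w ≠ y) :
    ∃ x, JoinedIn (pairs P) (w, y) (p, x) := by
  obtain ⟨U, hU, hUP⟩ := hPp
  have hp : p ∈ P := hUP ⟨mem_of_mem_nhds hU, hpi⟩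
  by_cases hwp : w = p
  · subst hwp; exact ⟨y, JoinedIn.refl ⟨hw, hy, hwy⟩⟩
  by_cases hyw : y ∈ tseg w p
  · obtain ⟨x, hxU, hxp, hxi, hpx⟩ := h.through_near hpi hwp hU
    have hx : x ∈ P := hUP ⟨hxU, hxi⟩
    refine ⟨x, (h.move_snd hP hw hy hx ?_).trans (h.move_fst hP hw hp hx ?_)⟩
    · exact fun hh => hwy (h.anti w x y (tseg_subset_left hpx hyw) hh)
    · exact fun hh => hxp (h.anti' hpx hh)
  · exact ⟨y, h.move_fst hP hw hp hy hyw⟩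

theorem DendHyp.pair_b (h : DendHyp X) {P : Set X} (hP : SegConvex P) {p w x : X}
    (hPw : ∃ U ∈ 𝓝 w, U ∩ inner X ⊆ P) (hwi : w ∈ inner X)
    (hp : p ∈ P) (hx : x ∈ P) (hpx : p ≠ x) :
    ∃ y, JoinedIn (pairs P) (p, x) (w, y) :=
  h.pair_a hP hPw hwi hp hx hpx

theorem DendHyp.pair_c (h : DendHyp X) {P : Set X} (hP : SegConvex P) {b x x' : X}
    (hPb : ∃ U ∈ 𝓝 b, U ∩ inner X ⊆ P) (hb : IsTriple b)
    (hx : x ∈ P) (hx' : x' ∈ P) (hbx : b ≠ x) (hbx' : b ≠ x') :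
    JoinedIn (pairs P) (b, x) (b, x') := by
  obtain ⟨U, hU, hUP⟩ := hPb
  have hbP : b ∈ P := hUP ⟨mem_of_mem_nhds hU, hb.inner⟩
  by_cases hbs : b ∈ tseg x x'
  · obtain ⟨g, hgU, hgb, hgi, hxg, hxg'⟩ := h.third_near hb x x' hU
    have hg : g ∈ P := hUP ⟨hgU, hgi⟩
    refine (h.move_fst hP hbP hg hx ?_).trans
      ((h.move_snd hP hg hx hx' ?_).trans (h.move_fst hP hg hbP hx' ?_))
    · exact fun hh => hbx (h.anti x g b hxg hh).symm
    · intro hh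
      rcases h.tseg_subset_union x x' b hh with h1 | h1
      · exact hgb (h.anti' hxg h1)
      · rw [tseg_comm] at h1
        exact hgb (h.anti' hxg' h1)
    · intro hh
      rw [tseg_comm] at hh
      exact hbx' (h.anti x' g b hxg' hh).symm
  · exact h.move_snd hP hbP hx hx' hbs

end HullBasics

/-! ### Part 2: constrained configurations in a dendrite-like space -/

section Abstract

open Set Topology Function

variable {X : Type*} [TopologicalSpace X] {N L : Type*}

/-- Abstract rooted binary tree hypotheses. -/
structure NodeHyp (le : N → N → Prop) (ι : L → N) : Prop where
  refl : ∀ v, le v v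
  trans : ∀ u v w, le u v → le v w → le u w
  chain : ∀ l v w, le (ι l) v → le (ι l) w → le v w ∨ le w v
  leaves : ∀ l l', le (ι l) (ι l') → l = l'
  cherry : ∀ S : Set L, ¬ S.Subsingleton → ∃ c l₁ l₂, l₁ ≠ l₂ ∧
    ∀ l, (l ∈ S ∧ le (ι l) c) ↔ (l = l₁ ∨ l = l₂)

def inc (le : N → N → Prop) (v w : N) : Prop := ¬ le v w ∧ ¬ le w v

def dn (le : N → N → Prop) (ι : L → N) (S : Set L) (v : N) : Set L := {l | l ∈ S ∧ le (ι l) v}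

def hl (le : N → N → Prop) (ι : L → N) (x : L → X) (S : Set L) (v : N) : Set X :=
  ConvH (x '' dn le ι S v)

/-- Constrained configurations with respect to the leaves in `S`. -/
def CK (X : Type*) [TopologicalSpace X] (le : N → N → Prop) (ι : L → N) (S : Set L) :
    Set (L → X) :=
  {x | ∀ v w, inc le v w → Disjoint (hl le ι x S v) (hl le ι x S w)}

def CF (X : Type*) [TopologicalSpace X] (le : N → N → Prop) (ι : L → N) (S : Set L) :
    Set (L → X) :=
  {x | (∀ l, x l ∈ inner X) ∧ x ∈ CK X le ι S}

/-- Weak condition relative to a node `c`. -/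
def CO (X : Type*) [TopologicalSpace X] (le : N → N → Prop) (ι : L → N) (S : Set L) (c : N) :
    Set (L → X) :=
  {x | ∀ v w, inc le v w → ¬ ((le v c ∧ ¬ le c v) ∧ (le w c ∧ ¬ le c w)) →
    Disjoint (hl le ι x S v) (hl le ι x S w)}

theorem DendHyp.eventually_disjoint [Finite L] [T2Space X] [CompactSpace X] (h : DendHyp X)
    (A B : Set L) (x : L → X) (hx : Disjoint (ConvH (x '' A)) (ConvH (x '' B))) :
    ∀ᶠ y in 𝓝 x, Disjoint (ConvH (y '' A)) (ConvH (y '' B)) := by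
  have half : ∀ (A : Set L) (U : Set X), IsOpen U → ConvH (x '' A) ⊆ U →
      ∀ᶠ y in 𝓝 x, ConvH (y '' A) ⊆ U := by
    intro A U hU hAU
    have hB : ∀ l : L, ∃ B ∈ 𝓝 (x l), (l ∈ A → B ⊆ U) ∧ IsClosed B ∧ IsPreconnected B := by
      intro l
      by_cases hl : l ∈ A
      · obtain ⟨B, hB, h1, h2, h3⟩ := h.nb (x l) U
          (hU.mem_nhds (hAU (subset_ConvH _ ⟨l, hl, rfl⟩)))
        exact ⟨B, hB, fun _ => h1, h2, h3⟩
      · obtain ⟨B, hB, h1, h2, h3⟩ := h.nb (x l) univ Filter.univ_mem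
        exact ⟨B, hB, fun h' => absurd h' hl, h2, h3⟩
    choose B hB hBU hBc hBp using hB
    have hev : Set.pi univ B ∈ 𝓝 x := set_pi_mem_nhds finite_univ fun l _ => hB l
    filter_upwards [hev] with y hy
    have hfin : (x '' A).Finite := (toFinite A).image x
    rcases A.eq_empty_or_nonempty with rfl | ⟨a, ha⟩
    · simp [ConvH_empty]
    have hsub : ConvH (y '' A) ⊆ ⋃ l ∈ A, (ConvH (x '' A) ∪ B l) := by
      refine ConvH_min ?_ ((toFinite A).isClosed_biUnion fun l _ =>
        (isClosed_ConvH _).union (hBc l)) ?_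
      · rintro _ ⟨l, hl, rfl⟩
        exact mem_biUnion hl (Or.inr (hy l (mem_univ l)))
      · rw [biUnion_eq_iUnion]
        refine isPreconnected_iUnion ⟨x a, mem_iInter.2 fun l => Or.inl ?_⟩ ?_
        · exact subset_ConvH _ ⟨a, ha, rfl⟩
        · intro l
          exact IsPreconnected.union (x l) (subset_ConvH _ ⟨l, l.2, rfl⟩)
            (mem_of_mem_nhds (hB l)) (h.isPreconnected_ConvH hfin) (hBp l)
    refine hsub.trans (iUnion₂_subset fun l hl => union_subset hAU (hBU l hl))
  obtain ⟨U, W, hU, hW, hAU, hBW, hUW⟩ :=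
    normal_separation (isClosed_ConvH _) (isClosed_ConvH _) hx
  filter_upwards [half A U hU hAU, half B W hW hBW] with y h1 h2
  exact hUW.mono h1 h2


section Cherry

variable {le : N → N → Prop} {ι : L → N} {S : Set L} {c : N} {l₁ l₂ : L}

theorem NodeHyp.bar (hT : NodeHyp le ι) {H H' : N → Set X}
    (hH : ∀ v w, inc le v w → Disjoint (H v) (H w))
    (h1 : ∀ v, ¬ (le v c ∧ ¬ le c v) → H' v ⊆ H v)
    (h2 : ∀ v, (le v c ∧ ¬ le c v) → H' v ⊆ H c) (v w : N) (hvw : inc le v w)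
    (hb : ¬ ((le v c ∧ ¬ le c v) ∧ (le w c ∧ ¬ le c w))) : Disjoint (H' v) (H' w) := by
  have key : ∀ v w, inc le v w → (le v c ∧ ¬ le c v) → ¬ (le w c ∧ ¬ le c w) → inc le c w := by
    intro v w hvw hv hw
    refine ⟨fun h => hvw.1 (hT.trans _ _ _ hv.1 h), fun h => ?_⟩
    by_cases h' : le c w
    · exact hvw.1 (hT.trans _ _ _ hv.1 h')
    · exact hw ⟨h, h'⟩
  by_cases hv : le v c ∧ ¬ le c v
  · have hw : ¬ (le w c ∧ ¬ le c w) := fun hw => hb ⟨hv, hw⟩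
    exact (hH _ _ (key v w hvw hv hw)).mono (h2 v hv) (h1 w hw)
  · by_cases hw : le w c ∧ ¬ le c w
    · exact ((hH _ _ (key w v hvw.symm hw hv)).mono (h2 w hw) (h1 v hv)).symm
    · exact (hH v w hvw).mono (h1 v hv) (h1 w hw)

theorem NodeHyp.CK_of_CO [T1Space X] (hT : NodeHyp le ι)
    (hc : ∀ l, (l ∈ S ∧ le (ι l) c) ↔ (l = l₁ ∨ l = l₂)) {x : L → X}
    (hx : x ∈ CO X le ι S c) (hne : x l₁ ≠ x l₂) : x ∈ CK X le ι S := by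
  intro v w hvw
  by_cases hb : (le v c ∧ ¬ le c v) ∧ (le w c ∧ ¬ le c w)
  · have sub : ∀ v, le v c → ∀ l ∈ dn le ι S v, l = l₁ ∨ l = l₂ := fun v hv l hl =>
      (hc l).1 ⟨hl.1, hT.trans _ _ _ hl.2 hv⟩
    have sv := sub v hb.1.1
    have sw := sub w hb.2.1
    have dis : ∀ l, l ∈ dn le ι S v → l ∉ dn le ι S w := by
      intro l hl hl'
      rcases hT.chain l v w hl.2 hl'.2 with h | h
      · exact hvw.1 h
      · exact hvw.2 h
    have single : ∀ (v : N) (i j : L), (∀ l ∈ dn le ι S v, l = i ∨ l = j) →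
        j ∉ dn le ι S v → hl le ι x S v ⊆ {x i} := by
      intro v i j h hj
      apply ConvH_subsingleton
      rintro _ ⟨l, hl, rfl⟩
      rcases h l hl with rfl | rfl
      · rfl
      · exact absurd hl hj
    by_cases h1 : l₁ ∈ dn le ι S v
    · by_cases h2 : l₂ ∈ dn le ι S v
      · have : dn le ι S w = ∅ := by
          rw [eq_empty_iff_forall_notMem]
          intro l hl
          rcases sw l hl with rfl | rfl
          · exact dis _ h1 hl
          · exact dis _ h2 hl
        unfold hl
        rw [this, image_empty, ConvH_empty]
        exact disjoint_bot_right
      · exact (disjoint_singleton.2 hne).mono (single v l₁ l₂ sv h2)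
          (single w l₂ l₁ (fun l hl => (sw l hl).symm) (dis _ h1))
    · by_cases h2 : l₂ ∈ dn le ι S v
      · exact (disjoint_singleton.2 hne.symm).mono
          (single v l₂ l₁ (fun l hl => (sv l hl).symm) h1) (single w l₁ l₂ sw (dis _ h2))
      · have : dn le ι S v = ∅ := by
          rw [eq_empty_iff_forall_notMem]
          intro l hl
          rcases sv l hl with rfl | rfl
          · exact h1 hl
          · exact h2 hl
        unfold hl
        rw [this, image_empty, ConvH_empty]
        exact disjoint_bot_left
  · exact hx v w hvw hb

theorem NodeHyp.CK_ne (hT : NodeHyp le ι) (h1 : l₁ ∈ S) (h2 : l₂ ∈ S) (hl12 : l₁ ≠ l₂)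
    {x : L → X} (hx : x ∈ CK X le ι S) : x l₁ ≠ x l₂ := by
  intro h
  have hd := hx (ι l₁) (ι l₂) ⟨fun h => hl12 (hT.leaves _ _ h),
    fun h => hl12 (hT.leaves _ _ h).symm⟩
  have hA : x l₁ ∈ hl le ι x S (ι l₁) := subset_ConvH _ ⟨l₁, ⟨h1, hT.refl _⟩, rfl⟩
  have hB : x l₂ ∈ hl le ι x S (ι l₂) := subset_ConvH _ ⟨l₂, ⟨h2, hT.refl _⟩, rfl⟩
  rw [h] at hA
  exact Set.disjoint_left.1 hd hA hB

theorem NodeHyp.CO_double (hT : NodeHyp le ι) (hl12 : l₁ ≠ l₂)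
    (hc : ∀ l, (l ∈ S ∧ le (ι l) c) ↔ (l = l₁ ∨ l = l₂)) {w : L → X}
    (hw : w ∈ CK X le ι (S \ {l₂})) : update w l₂ (w l₁) ∈ CO X le ι S c := by
  have hm1 := (hc l₁).2 (Or.inl rfl)
  have hm2 := (hc l₂).2 (Or.inr rfl)
  refine hT.bar hw (c := c) ?_ ?_
  · intro v hv
    apply ConvH_mono
    rintro _ ⟨l, hl, rfl⟩
    by_cases h : l = l₂
    · subst h
      rw [update_self]
      refine ⟨l₁, ⟨⟨hm1.1, hl12⟩, ?_⟩, rfl⟩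
      have hcv : le c v := by
        rcases hT.chain l v c hl.2 hm2.2 with h | h
        · by_contra h'; exact hv ⟨h, h'⟩
        · exact h
      exact hT.trans _ _ _ hm1.2 hcv
    · rw [update_of_ne h]
      exact ⟨l, ⟨⟨hl.1, h⟩, hl.2⟩, rfl⟩
  · intro v hv
    apply ConvH_mono
    rintro _ ⟨l, hl, rfl⟩
    have hxl : update w l₂ (w l₁) l = w l₁ := by
      rcases (hc l).1 ⟨hl.1, hT.trans _ _ _ hl.2 hv.1⟩ with rfl | rfl
      · rw [update_of_ne hl12]
      · rw [update_self]
    rw [hxl]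
    exact ⟨l₁, ⟨⟨hm1.1, hl12⟩, hm1.2⟩, rfl⟩

theorem NodeHyp.CK_slide [T1Space X] (hT : NodeHyp le ι) (hl12 : l₁ ≠ l₂)
    (hc : ∀ l, (l ∈ S ∧ le (ι l) c) ↔ (l = l₁ ∨ l = l₂)) {x : L → X}
    (hx : x ∈ CK X le ι S) {y : X} (hy : y ∈ tseg (x l₁) (x l₂)) (hne : y ≠ x l₁) :
    update x l₂ y ∈ CK X le ι S := by
  have hm1 := (hc l₁).2 (Or.inl rfl)
  have hm2 := (hc l₂).2 (Or.inr rfl)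
  have hyc : ∀ v, le c v → y ∈ hl le ι x S v := by
    intro v hv
    refine tseg_subset ?_ ?_ hy <;> apply subset_ConvH
    · exact ⟨l₁, ⟨hm1.1, hT.trans _ _ _ hm1.2 hv⟩, rfl⟩
    · exact ⟨l₂, ⟨hm2.1, hT.trans _ _ _ hm2.2 hv⟩, rfl⟩
  refine hT.CK_of_CO hc (hT.bar hx (c := c) ?_ ?_) ?_
  · intro v hv
    apply ConvH_subset_of_subset
    rintro _ ⟨l, hl, rfl⟩
    by_cases h : l = l₂
    · subst h
      rw [update_self]
      apply hyc
      rcases hT.chain l v c hl.2 hm2.2 with h | h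
      · by_contra h'; exact hv ⟨h, h'⟩
      · exact h
    · rw [update_of_ne h]
      exact subset_ConvH _ ⟨l, hl, rfl⟩
  · intro v hv
    apply ConvH_subset_of_subset
    rintro _ ⟨l, hl, rfl⟩
    by_cases h : l = l₂
    · subst h
      rw [update_self]
      exact hyc c (hT.refl c)
    · rw [update_of_ne h]
      exact subset_ConvH _ ⟨l, ⟨hl.1, hT.trans _ _ _ hl.2 hv.1⟩, rfl⟩
  · rw [update_self, update_of_ne hl12]
    exact hne.symm

theorem CK_mono {S S' : Set L} (h : S' ⊆ S) : CK X le ι S ⊆ CK X le ι S' := by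
  intro x hx v w hvw
  refine (hx v w hvw).mono ?_ ?_ <;>
  exact ConvH_mono (image_mono fun l hl => ⟨h hl.1, hl.2⟩)

theorem CK_update (S : Set L) (l₂ : L) {x : L → X} (y : X)
    (hx : x ∈ CK X le ι (S \ {l₂})) : update x l₂ y ∈ CK X le ι (S \ {l₂}) := by
  have : ∀ v, hl le ι (update x l₂ y) (S \ {l₂}) v = hl le ι x (S \ {l₂}) v := by
    intro v
    unfold hl
    congr 1
    apply image_congr
    intro l hl
    rw [update_of_ne hl.1.2]
  intro v w hvw
  rw [this, this]
  exact hx v w hvw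

variable [Finite L] [Finite N] [T2Space X] [CompactSpace X]

theorem DendHyp.CO_nhds (h : DendHyp X) {x : L → X} (hx : x ∈ CO X le ι S c) :
    CO X le ι S c ∈ 𝓝 x := by
  have : ∀ᶠ y in 𝓝 x, ∀ v w, inc le v w →
    ¬ ((le v c ∧ ¬ le c v) ∧ (le w c ∧ ¬ le c w)) →
    Disjoint (hl le ι y S v) (hl le ι y S w) := by
    simp only [Filter.eventually_all]
    intro v w h1 h2
    exact h.eventually_disjoint _ _ x (hx v w h1 h2)
  exact this

theorem DendHyp.CK_nhds (h : DendHyp X) {x : L → X} (hx : x ∈ CK X le ι S) :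
    CK X le ι S ∈ 𝓝 x := by
  have : ∀ᶠ y in 𝓝 x, ∀ v w, inc le v w →
    Disjoint (hl le ι y S v) (hl le ι y S w) := by
    simp only [Filter.eventually_all]
    intro v w h1
    exact h.eventually_disjoint _ _ x (hx v w h1)
  exact this

theorem exists_box {x : L → X} {O : Set (L → X)} (hO : O ∈ 𝓝 x) :
    ∃ U : L → Set X, (∀ l, U l ∈ 𝓝 (x l)) ∧ ∀ u, (∀ l, u l ∈ U l) → u ∈ O := by
  rw [nhds_pi, Filter.mem_pi] at hO
  obtain ⟨I, hI, t, ht, hsub⟩ := hO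
  exact ⟨t, ht, fun u hu => hsub fun l _ => hu l⟩

theorem segConvex_of {B : Set X} (hc : IsClosed B) (hp : IsPreconnected B) : SegConvex B :=
  fun _ ha _ hb => tseg_min ha hb hc hp

theorem SegConvex.inter_inner {B : Set X} (hB : SegConvex B) : SegConvex (B ∩ inner X) :=
  fun _ ha _ hb => subset_inter (hB _ ha.1 _ hb.1) (tseg_subset_inner ha.2 hb.2)

theorem DendHyp.cherry_box (h : DendHyp X) (hT : NodeHyp le ι) (hl12 : l₁ ≠ l₂)
    (hc : ∀ l, (l ∈ S ∧ le (ι l) c) ↔ (l = l₁ ∨ l = l₂)) {z : L → X}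
    (hz : z ∈ CK X le ι (S \ {l₂})) :
    ∃ B : L → Set X, (∀ l, l ≠ l₂ → B l ∈ 𝓝 (z l)) ∧ B l₂ = B l₁ ∧ (∀ l, SegConvex (B l)) ∧
      ∀ u : L → X, (∀ l, u l ∈ B l) → u l₁ ≠ u l₂ → u ∈ CK X le ι S := by
  obtain ⟨U, hU, hUO⟩ := exists_box (h.CO_nhds (hT.CO_double hl12 hc hz))
  have hB : ∀ l, ∃ B ∈ 𝓝 (update z l₂ (z l₁) l), B ⊆ U l ∧ IsClosed B ∧ IsPreconnected B :=
    fun l => h.nb _ _ (hU l)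
  choose B hB hBU hBc hBp using hB
  have hU1 := hU l₁
  have hU2 := hU l₂
  rw [update_of_ne hl12] at hU1
  rw [update_self] at hU2
  obtain ⟨P, hP, hPU, hPc, hPp⟩ := h.nb (z l₁) (U l₁ ∩ U l₂) (Filter.inter_mem hU1 hU2)
  refine ⟨fun l => if l = l₁ ∨ l = l₂ then P else B l, ?_, by simp, ?_, ?_⟩
  · intro l hl
    by_cases h1 : l = l₁
    · subst h1; simpa using hP
    · have := hB l
      rw [update_of_ne hl] at this
      simpa [h1, hl] using this
  · intro l
    by_cases h1 : l = l₁ ∨ l = l₂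
    · simp only [h1, if_true]; exact segConvex_of hPc hPp
    · simp only [h1, if_false]; exact segConvex_of (hBc l) (hBp l)
  · intro u hu hne
    refine hT.CK_of_CO hc (hUO u fun l => ?_) hne
    have := hu l
    by_cases h1 : l = l₁
    · subst h1
      simp only [true_or, if_true] at this
      exact (hPU this).1
    · by_cases h2 : l = l₂
      · subst h2
        simp only [or_true, if_true] at this
        exact (hPU this).2
      · simp only [h1, h2, or_self, if_false] at this
        exact hBU l this

theorem DendHyp.box_join (h : DendHyp X) (hl12 : l₁ ≠ l₂) {B : L → Set X}
    (hB2 : B l₂ = B l₁) (hBs : ∀ l, SegConvex (B l))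
    (hBC : ∀ u : L → X, (∀ l, u l ∈ B l) → u l₁ ≠ u l₂ → u ∈ CK X le ι S) {u u' : L → X}
    (hu : ∀ l, l ≠ l₂ → u l ∈ B l ∩ inner X) (hu' : ∀ l, l ≠ l₂ → u' l ∈ B l ∩ inner X)
    (hj : JoinedIn (pairs (B l₁ ∩ inner X)) (u l₁, u l₂) (u' l₁, u' l₂)) :
    JoinedIn (CF X le ι S) u u' := by
  have hu2 : ∀ l, u l ∈ B l ∩ inner X := by
    intro l
    by_cases h2 : l = l₂
    · rw [h2, hB2]; exact hj.source_mem.2.1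
    · exact hu l h2
  have hu2' : ∀ l, u' l ∈ B l ∩ inner X := by
    intro l
    by_cases h2 : l = l₂
    · rw [h2, hB2]; exact hj.target_mem.2.1
    · exact hu' l h2
  have hpi : JoinedIn (Set.pi univ fun l => B l ∩ inner X) u u' := by
    apply JoinedIn.pi
    intro l
    exact (h.joined (u l) (u' l)).mono ((hBs l).inter_inner _ (hu2 l) _ (hu2' l))
  have hprod := hj.prod hpi
  let f : (X × X) × (L → X) → (L → X) := fun q l =>
    if l = l₁ then q.1.1 else if l = l₂ then q.1.2 else q.2 l
  have hf : Continuous f := by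
    refine continuous_pi fun l => ?_
    by_cases h1 : l = l₁
    · simp only [f, h1, if_true]; fun_prop
    · by_cases h2 : l = l₂
      · simp only [f, h1, h2, if_true, if_false, hl12.symm]; fun_prop
      · simp only [f, h1, h2, if_false]; fun_prop
  have hfu : ∀ u : L → X, f ((u l₁, u l₂), u) = u := by
    intro u; funext l
    by_cases h1 : l = l₁
    · simp [f, h1]
    · by_cases h2 : l = l₂
      · simp [f, h2, hl12.symm]
      · simp [f, h1, h2]
  have hm := hprod.map hf
  rw [hfu, hfu] at hm
  refine hm.mono ?_
  rintro _ ⟨⟨q, r⟩, ⟨hq, hr⟩, rfl⟩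
  have hmem : ∀ l, f (q, r) l ∈ B l ∩ inner X := by
    intro l
    by_cases h1 : l = l₁
    · subst h1; simp only [f, if_true]; exact hq.1
    · by_cases h2 : l = l₂
      · subst h2; simp only [f, h1, if_true, if_false, hB2]; exact hq.2.1
      · simp only [f, h1, h2, if_false]; exact hr l (mem_univ l)
  refine ⟨fun l => (hmem l).2, hBC _ (fun l => (hmem l).1) ?_⟩
  simp only [f, if_true, hl12.symm, if_false]
  exact hq.2.2

/-- Slide `l₂` toward `l₁`, ending inside a neighbourhood. -/
theorem DendHyp.slide_near (h : DendHyp X) (hT : NodeHyp le ι) (hl12 : l₁ ≠ l₂)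
    (hc : ∀ l, (l ∈ S ∧ le (ι l) c) ↔ (l = l₁ ∨ l = l₂)) {w : L → X} {y : X}
    (hx : update w l₂ y ∈ CF X le ι S) {U : Set X} (hU : U ∈ 𝓝 (w l₁)) :
    ∃ y' ∈ U ∩ inner X, w l₁ ≠ y' ∧ JoinedIn (CF X le ι S) (update w l₂ y) (update w l₂ y') := by
  have hm1 := (hc l₁).2 (Or.inl rfl)
  have hm2 := (hc l₂).2 (Or.inr rfl)
  have hne : w l₁ ≠ y := by
    have := hT.CK_ne hm1.1 hm2.1 hl12 hx.2
    rwa [update_of_ne hl12, update_self] at this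
  obtain ⟨y', hy', hyU, hyn, hyi⟩ := h.near hne hU
  refine ⟨y', ⟨hyU, hyi⟩, hyn.symm, ?_⟩
  have hyin : y ∈ inner X := by simpa using hx.1 l₂
  have hcont : Continuous fun s : X => update w l₂ s := by fun_prop
  refine ((h.joined y y').map hcont).mono ?_
  rintro _ ⟨s, hs, rfl⟩
  constructor
  · intro l
    by_cases h2 : l = l₂
    · subst h2; simp only [update_self]; exact tseg_subset_inner hyin hyi hs
    · have := hx.1 l
      rw [update_of_ne h2] at this
      simpa only [update_of_ne h2] using this
  · have := hT.CK_slide hl12 hc hx.2 (y := s) ?_ ?_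
    · rwa [update_idem] at this
    · rw [update_of_ne hl12, update_self]
      rw [tseg_comm] at hs
      exact tseg_subset_right hy' hs
    · rw [update_of_ne hl12]
      rintro rfl
      rw [tseg_comm] at hs
      exact hyn (h.anti _ y y' hy' hs).symm

end Cherry

section Main

variable [Finite L] [Finite N] [T2Space X] [CompactSpace X]

theorem DendHyp.CF_main (h : DendHyp X) {le : N → N → Prop} {ι : L → N} (hT : NodeHyp le ι)
    {b : X} (hb : IsTriple b) (n : ℕ) : ∀ S : Set L, S.ncard = n →
    (∀ l, ∃ z ∈ CF X le ι S, z l = b) ∧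
      ∀ x ∈ CF X le ι S, ∀ y ∈ CF X le ι S, JoinedIn (CF X le ι S) x y := by
  induction n using Nat.strong_induction_on with
  | _ n ih =>
  intro S hS
  by_cases hsub : S.Subsingleton
  · have hall : ∀ x : L → X, x ∈ CK X le ι S := by
      intro x v w hvw
      by_cases hv : dn le ι S v = ∅
      · unfold hl
        rw [hv, image_empty, ConvH_empty]
        exact disjoint_bot_left
      · by_cases hw : dn le ι S w = ∅
        · unfold hl
          rw [hw, image_empty, ConvH_empty]
          exact disjoint_bot_right
        · obtain ⟨a, ha⟩ := nonempty_iff_ne_empty.2 hv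
          obtain ⟨a', ha'⟩ := nonempty_iff_ne_empty.2 hw
          have := hsub ha.1 ha'.1
          subst this
          rcases hT.chain a v w ha.2 ha'.2 with h' | h'
          · exact absurd h' hvw.1
          · exact absurd h' hvw.2
    refine ⟨fun l => ⟨fun _ => b, ⟨fun _ => hb.inner, hall _⟩, rfl⟩, ?_⟩
    intro x hx y hy
    have hpi : JoinedIn (Set.pi univ fun _ : L => inner X) x y := by
      apply JoinedIn.pi
      intro l
      exact (h.joined (x l) (y l)).mono (tseg_subset_inner (hx.1 l) (hy.1 l))
    exact hpi.mono fun u hu => ⟨fun l => hu l (mem_univ l), hall u⟩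
  · obtain ⟨c, l₁, l₂, hl12, hc⟩ := hT.cherry S hsub
    have hm1 := (hc l₁).2 (Or.inl rfl)
    have hm2 := (hc l₂).2 (Or.inr rfl)
    have hlt : (S \ {l₂}).ncard < n := by
      rw [← hS]
      exact ncard_sdiff_singleton_lt_of_mem hm2.1
    obtain ⟨ihb, ihj⟩ := ih _ hlt (S \ {l₂}) rfl
    have hsub' : CF X le ι S ⊆ CF X le ι (S \ {l₂}) :=
      fun x hx => ⟨hx.1, CK_mono sdiff_subset hx.2⟩
    constructor
    · intro l
      by_cases hll : l = l₂
      · obtain ⟨z, hz, hzb⟩ := ihb l₁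
        obtain ⟨B, hBn, hB2, hBs, hBC⟩ := h.cherry_box hT hl12 hc hz.2
        have hnb := hBn l₁ hl12
        rw [hzb] at hnb
        obtain ⟨a, -, -, hab, -⟩ := id hb
        obtain ⟨y, -, hyB, hyb, hyi⟩ := h.near hab.symm hnb
        refine ⟨update (update z l₂ b) l₁ y, ⟨?_, hBC _ ?_ ?_⟩, ?_⟩
        · intro m
          by_cases h1 : m = l₁
          · subst h1; simpa using hyi
          · rw [update_of_ne h1]
            by_cases h2 : m = l₂
            · subst h2; simpa using hb.inner
            · rw [update_of_ne h2]; exact hz.1 m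
        · intro m
          by_cases h1 : m = l₁
          · subst h1; simpa using hyB
          · rw [update_of_ne h1]
            by_cases h2 : m = l₂
            · subst h2; rw [update_self, hB2]; exact mem_of_mem_nhds hnb
            · rw [update_of_ne h2]; exact mem_of_mem_nhds (hBn m h2)
        · rw [update_self, update_of_ne hl12.symm, update_self]; exact hyb
        · rw [hll, update_of_ne hl12.symm, update_self]
      · obtain ⟨z, hz, hzb⟩ := ihb l
        obtain ⟨B, hBn, hB2, hBs, hBC⟩ := h.cherry_box hT hl12 hc hz.2
        have hnb := hBn l₁ hl12
        obtain ⟨a, a', ha, -, -⟩ := id (hz.1 l₁)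
        obtain ⟨y, -, hyB, hyb, hyi⟩ := h.near ha.symm hnb
        refine ⟨update z l₂ y, ⟨?_, hBC _ ?_ ?_⟩, ?_⟩
        · intro m
          by_cases h2 : m = l₂
          · subst h2; simpa using hyi
          · rw [update_of_ne h2]; exact hz.1 m
        · intro m
          by_cases h2 : m = l₂
          · subst h2; rw [update_self, hB2]; exact hyB
          · rw [update_of_ne h2]; exact mem_of_mem_nhds (hBn m h2)
        · rw [update_self, update_of_ne hl12]; exact hyb.symm
        · rw [update_of_ne hll]; exact hzb
    · obtain ⟨z, hz, hzb⟩ := ihb l₁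
      have hpre : IsPreconnected (CF X le ι (S \ {l₂})) := by
        have : IsPathConnected (CF X le ι (S \ {l₂})) := ⟨z, hz, fun {y} hy => ihj z hz y hy⟩
        exact this.isConnected.isPreconnected
      have key : ∀ w ∈ CF X le ι (S \ {l₂}), ∀ y, update w l₂ y ∈ CF X le ι S →
          ∃ x, JoinedIn (CF X le ι S) (update w l₂ y) (update z l₂ x) := by
        intro w hw
        refine hpre.induction₂' (fun w w' => ∀ y, update w l₂ y ∈ CF X le ι S →
          ∃ x, JoinedIn (CF X le ι S) (update w l₂ y) (update w' l₂ x)) ?_ ?_ hw hz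
        · intro v hv
          obtain ⟨B, hBn, hB2, hBs, hBC⟩ := h.cherry_box hT hl12 hc hv.2
          have claim : ∀ w w' : L → X, w ∈ CF X le ι (S \ {l₂}) → w' ∈ CF X le ι (S \ {l₂}) →
              (∀ l, l ≠ l₂ → B l ∈ 𝓝 (w l)) → (∀ l, l ≠ l₂ → B l ∈ 𝓝 (w' l)) →
              ∀ y, update w l₂ y ∈ CF X le ι S →
              ∃ x, JoinedIn (CF X le ι S) (update w l₂ y) (update w' l₂ x) := by
            intro w w' hw hw' hwB hwB' y hy
            obtain ⟨y', hy', hyn, hj⟩ := h.slide_near hT hl12 hc hy (hwB l₁ hl12)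
            obtain ⟨x, hx⟩ := h.pair_a (hBs l₁).inter_inner
              (p := w' l₁) ⟨B l₁, hwB' l₁ hl12, Subset.refl _⟩ (hw'.1 l₁)
              ⟨mem_of_mem_nhds (hwB l₁ hl12), hw.1 l₁⟩ hy' hyn
            refine ⟨x, hj.trans (h.box_join hl12 hB2 hBs hBC ?_ ?_ ?_)⟩
            · intro l hl
              rw [update_of_ne hl]
              exact ⟨mem_of_mem_nhds (hwB l hl), hw.1 l⟩
            · intro l hl
              rw [update_of_ne hl]
              exact ⟨mem_of_mem_nhds (hwB' l hl), hw'.1 l⟩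
            · simpa only [update_of_ne hl12, update_self] using hx
          have hev : ∀ᶠ w in 𝓝 v, ∀ l, l ≠ l₂ → B l ∈ 𝓝 (w l) := by
            simp only [Filter.eventually_all]
            intro l hl
            have h1 : ∀ᶠ q in 𝓝 (v l), B l ∈ 𝓝 q := eventually_mem_nhds_iff.2 (hBn l hl)
            exact (continuous_apply l).continuousAt.eventually h1
          filter_upwards [self_mem_nhdsWithin, mem_nhdsWithin_of_mem_nhds hev] with w hw hwB
          exact ⟨claim v w hv hw hBn hwB, claim w v hw hv hwB hBn⟩
        · intro w1 w2 w3 _ _ _ h12 h23 y hy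
          obtain ⟨x, hx⟩ := h12 y hy
          obtain ⟨x', hx'⟩ := h23 x hx.target_mem
          exact ⟨x', hx.trans hx'⟩
      have fin : ∀ x x', update z l₂ x ∈ CF X le ι S → update z l₂ x' ∈ CF X le ι S →
          JoinedIn (CF X le ι S) (update z l₂ x) (update z l₂ x') := by
        intro x x' hx hx'
        obtain ⟨B, hBn, hB2, hBs, hBC⟩ := h.cherry_box hT hl12 hc hz.2
        obtain ⟨y, hy, hyn, hj⟩ := h.slide_near hT hl12 hc hx (hBn l₁ hl12)
        obtain ⟨y', hy', hyn', hj'⟩ := h.slide_near hT hl12 hc hx' (hBn l₁ hl12)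
        refine hj.trans ((h.box_join hl12 hB2 hBs hBC ?_ ?_ ?_).trans hj'.symm)
        · intro l hl
          rw [update_of_ne hl]
          exact ⟨mem_of_mem_nhds (hBn l hl), hz.1 l⟩
        · intro l hl
          rw [update_of_ne hl]
          exact ⟨mem_of_mem_nhds (hBn l hl), hz.1 l⟩
        · simp only [update_of_ne hl12, update_self]
          have hnb := hBn l₁ hl12
          rw [hzb] at hnb hyn hyn' ⊢
          exact h.pair_c (hBs l₁).inter_inner ⟨B l₁, hnb, Subset.refl _⟩ hb hy hy' hyn hyn'
      intro x hx y hy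
      have ex := key x (hsub' hx) (x l₂) (by rwa [update_eq_self])
      have ey := key y (hsub' hy) (y l₂) (by rwa [update_eq_self])
      rw [update_eq_self] at ex ey
      obtain ⟨p, hp⟩ := ex
      obtain ⟨q, hq⟩ := ey
      exact hp.trans ((fin p q hp.target_mem hq.target_mem).trans hq.symm)

theorem DendHyp.CK_isPathConnected (h : DendHyp X) {le : N → N → Prop} {ι : L → N}
    (hT : NodeHyp le ι) {b : X} (hb : IsTriple b) (hL : Nonempty L) :
    IsPathConnected (CK X le ι (univ : Set L)) := by
  obtain ⟨h1, h2⟩ := h.CF_main hT hb _ univ rfl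
  obtain ⟨l⟩ := hL
  obtain ⟨z, hz, -⟩ := h1 l
  refine ⟨z, hz.2, fun {x} hx => ?_⟩
  obtain ⟨U, hU, hUO⟩ := exists_box (h.CK_nhds hx)
  have hB : ∀ l, ∃ B ∈ 𝓝 (x l), B ⊆ U l ∧ IsClosed B ∧ IsPreconnected B :=
    fun l => h.nb _ _ (hU l)
  choose B hB hBU hBc hBp using hB
  have hy : ∀ l, ∃ y ∈ B l, y ∈ inner X := by
    intro l
    obtain ⟨a₁, a₂, -, h1, h2, -⟩ := id hb
    by_cases hxb : x l = b
    · exact ⟨x l, mem_of_mem_nhds (hB l), hxb ▸ hb.inner⟩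
    · obtain ⟨y, -, hyB, -, hyi⟩ := h.near hxb (hB l)
      exact ⟨y, hyB, hyi⟩
  choose y hyB hyi using hy
  have hpi : JoinedIn (Set.pi univ B) x y := by
    apply JoinedIn.pi
    intro l
    exact (h.joined (x l) (y l)).mono
      (segConvex_of (hBc l) (hBp l) _ (mem_of_mem_nhds (hB l)) _ (hyB l))
  have hj : JoinedIn (CK X le ι univ) x y :=
    hpi.mono fun u hu => hUO u fun l => hBU l (hu l (mem_univ l))
  have hyF : y ∈ CF X le ι univ := ⟨hyi, hj.target_mem⟩
  exact ((h2 z hz y hyF).mono fun u hu => hu.2).trans hj.symm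

end Main

end Abstract

/-! ### Part 3: geometric trees -/

section Geo

open Set Topology Function

variable {V : Type*} {G : SimpleGraph V}

/-- Indicator of the side of the edge `e` that contains its endpoint. -/
def sideF (e : G.Dart) (v : V) : ℝ :=
  if (G.deleteEdges {s(e.fst, e.snd)}).Reachable e.snd v then 1 else 0

theorem sideF_snd (e : G.Dart) : sideF e e.snd = 1 := by
  unfold sideF
  rw [if_pos (SimpleGraph.Reachable.refl _)]

theorem sideF_fst (hac : G.IsAcyclic) (e : G.Dart) : sideF e e.fst = 0 := by
  unfold sideF
  rw [if_neg]
  intro h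
  have h1 := SimpleGraph.isAcyclic_iff_forall_adj_isBridge.1 hac e.adj
  exact SimpleGraph.isBridge_iff.1 h1 h.symm

theorem sideF_cases (e : G.Dart) (v : V) : sideF e v = 0 ∨ sideF e v = 1 := by
  unfold sideF
  split_ifs <;> simp

theorem sideF_adj (e : G.Dart) {u v : V} (huv : G.Adj u v) (hne : s(u, v) ≠ s(e.fst, e.snd)) :
    sideF e u = sideF e v := by
  have h : (G.deleteEdges {s(e.fst, e.snd)}).Adj u v := by
    rw [SimpleGraph.deleteEdges_adj]
    exact ⟨huv, hne⟩
  unfold sideF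
  have : (G.deleteEdges {s(e.fst, e.snd)}).Reachable e.snd u ↔
      (G.deleteEdges {s(e.fst, e.snd)}).Reachable e.snd v :=
    ⟨fun h' => h'.trans h.reachable, fun h' => h'.trans h.symm.reachable⟩
  simp only [this]

theorem sideF_dart (e f : G.Dart) : f = e ∨ f = e.symm ∨ sideF e f.fst = sideF e f.snd := by
  by_cases h : f.edge = e.edge
  · rcases SimpleGraph.dart_edge_eq_iff f e |>.1 h with h | h
    · exact Or.inl h
    · exact Or.inr (Or.inl h)
  · exact Or.inr (Or.inr (sideF_adj e f.adj h))

theorem sideF_symm (hc : G.Connected) (hac : G.IsAcyclic) (e : G.Dart) (v : V) :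
    sideF e.symm v = 1 - sideF e v := by
  have key : ∀ u v : V, G.Walk u v → sideF e.symm u + sideF e u = 1 →
      sideF e.symm v + sideF e v = 1 := by
    intro u v p
    induction p with
    | nil => exact id
    | @cons u w v huw p ih =>
      intro h
      apply ih
      rcases sideF_dart e ⟨(u, w), huw⟩ with h1 | h1 | h1
      · subst h1
        have h2 := sideF_fst hac (SimpleGraph.Dart.symm ⟨(u, w), huw⟩)
        have h3 := sideF_snd (⟨(u, w), huw⟩ : G.Dart)
        simp only [SimpleGraph.Dart.symm] at *
        have h4 : sideF (⟨(w, u), huw.symm⟩ : G.Dart) w = 0 := h2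
        have h5 : sideF (⟨(u, w), huw⟩ : G.Dart) w = 1 := h3
        change sideF (⟨(w, u), huw.symm⟩ : G.Dart) w + _ = 1
        rw [h4, h5]; norm_num
      · have h2 : e = SimpleGraph.Dart.symm ⟨(u, w), huw⟩ := by
          rw [h1, SimpleGraph.Dart.symm_symm]
        subst h2
        have h4 : sideF (⟨(w, u), huw.symm⟩ : G.Dart) w = 0 :=
          sideF_fst hac (⟨(w, u), huw.symm⟩ : G.Dart)
        have h5 : sideF (⟨(u, w), huw⟩ : G.Dart) w = 1 := sideF_snd (⟨(u, w), huw⟩ : G.Dart)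
        change sideF (⟨(u, w), huw⟩ : G.Dart) w + sideF (⟨(w, u), huw.symm⟩ : G.Dart) w = 1
        rw [h4, h5]; norm_num
      · have h1' : sideF e u = sideF e w := h1
        have h2' : sideF e.symm u = sideF e.symm w := by
          rcases sideF_dart e.symm ⟨(u, w), huw⟩ with h2 | h2 | h2
          · exfalso
            rw [← e.symm_symm, ← h2] at h1'
            have h4 : sideF (⟨(w, u), huw.symm⟩ : G.Dart) w = 0 :=
              sideF_fst hac (⟨(w, u), huw.symm⟩ : G.Dart)
            have h5 : sideF (⟨(w, u), huw.symm⟩ : G.Dart) u = 1 :=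
              sideF_snd (⟨(w, u), huw.symm⟩ : G.Dart)
            change sideF (⟨(w, u), huw.symm⟩ : G.Dart) u =
              sideF (⟨(w, u), huw.symm⟩ : G.Dart) w at h1'
            rw [h4, h5] at h1'
            norm_num at h1'
          · exfalso
            rw [SimpleGraph.Dart.symm_symm] at h2
            rw [← h2] at h1'
            have h4 : sideF (⟨(u, w), huw⟩ : G.Dart) u = 0 :=
              sideF_fst hac (⟨(u, w), huw⟩ : G.Dart)
            have h5 : sideF (⟨(u, w), huw⟩ : G.Dart) w = 1 :=
              sideF_snd (⟨(u, w), huw⟩ : G.Dart)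
            rw [h4, h5] at h1'
            norm_num at h1'
          · exact h2
        rw [← h1', ← h2']; exact h
  obtain ⟨p⟩ := hc.preconnected e.fst v
  have h0 : sideF e.symm e.fst + sideF e e.fst = 1 := by
    rw [sideF_fst hac]
    have : sideF e.symm e.symm.snd = 1 := sideF_snd _
    have h' : e.symm.snd = e.fst := rfl
    rw [h'] at this
    rw [this]; norm_num
  linarith [key _ _ p h0]

theorem sideF_path {u w v : V} (huw : G.Adj u w) (p : G.Walk w v) (hu : u ∉ p.support) :
    sideF (⟨(u, w), huw⟩ : G.Dart) v = 1 := by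
  unfold sideF
  rw [if_pos]
  change (G.deleteEdges {s(u, w)}).Reachable w v
  rw [SimpleGraph.reachable_deleteEdges_iff_exists_walk]
  exact ⟨p, fun h => hu (p.fst_mem_support_of_mem_edges h)⟩

theorem exists_sideF (hc : G.Connected) {u v : V} (huv : u ≠ v) :
    ∃ f : G.Dart, f.fst = u ∧ sideF f v = 1 := by
  obtain ⟨p, hp⟩ := hc.exists_isPath u v
  cases p with
  | nil => exact absurd rfl huv
  | cons h p =>
    rw [SimpleGraph.Walk.cons_isPath_iff] at hp
    exact ⟨⟨(_, _), h⟩, rfl, sideF_path h p hp.2⟩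

/-- The point of the edge `e` at parameter `t`. -/
def pt (e : G.Dart) (t : ℝ) : TreeSpace G := Quot.mk _ (e, projIcc 0 1 zero_le_one t)

theorem continuous_pt (e : G.Dart) : Continuous (pt e) := by
  have h : Continuous fun t : ℝ => ((e, projIcc 0 1 zero_le_one t) : G.Dart × ↥(Icc (0 : ℝ) 1)) :=
    Continuous.prodMk continuous_const continuous_projIcc
  exact continuous_quot_mk.comp h

theorem exists_pt (x : TreeSpace G) : ∃ (e : G.Dart) (t : ℝ), t ∈ Icc (0 : ℝ) 1 ∧ x = pt e t := by
  obtain ⟨⟨e, t⟩, rfl⟩ := Quot.exists_rep x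
  refine ⟨e, t, t.2, ?_⟩
  unfold pt
  rw [projIcc_val]

theorem pt_symm (e : G.Dart) {t : ℝ} (ht : t ∈ Icc (0 : ℝ) 1) : pt e.symm t = pt e (1 - t) := by
  have ht' : 1 - t ∈ Icc (0 : ℝ) 1 := ⟨by linarith [ht.2], by linarith [ht.1]⟩
  unfold pt
  rw [projIcc_of_mem _ ht, projIcc_of_mem _ ht']
  apply Quot.sound
  left
  exact ⟨rfl, by simp⟩

theorem pt_zero {e f : G.Dart} (h : e.fst = f.fst) : pt e 0 = pt f 0 := by
  have h0 : (0 : ℝ) ∈ Icc (0 : ℝ) 1 := by simp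
  unfold pt
  rw [projIcc_of_mem _ h0]
  apply Quot.sound
  right
  exact ⟨h, rfl, rfl⟩

theorem pt_one (e : G.Dart) : pt e 1 = pt e.symm 0 := by
  rw [pt_symm e (by simp)]; simp

/-- The piecewise affine extension of a function on vertices. -/
def lin (F : V → ℝ) : TreeSpace G → ℝ :=
  Quot.lift (fun p : G.Dart × ↥(Icc (0 : ℝ) 1) =>
    (1 - (p.2 : ℝ)) * F p.1.fst + (p.2 : ℝ) * F p.1.snd) (by
    rintro ⟨e, s⟩ ⟨f, t⟩ (⟨h1, h2⟩ | ⟨h1, h2, h3⟩)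
    · simp only at h1 h2
      subst h1
      have h4 : f.symm.fst = f.snd := rfl
      have h5 : f.symm.snd = f.fst := rfl
      simp only [h4, h5, h2]
      ring
    · simp only at h1 h2 h3
      have h1' : e.fst = f.fst := h1
      simp only [h1', h2, h3]
      ring)

theorem lin_pt (F : V → ℝ) (e : G.Dart) {t : ℝ} (ht : t ∈ Icc (0 : ℝ) 1) :
    lin F (pt e t) = (1 - t) * F e.fst + t * F e.snd := by
  unfold pt
  rw [projIcc_of_mem _ ht]
  rfl

instance : DiscreteTopology G.Dart := ⟨rfl⟩

theorem continuous_lin (F : V → ℝ) : Continuous (lin (G := G) F) := by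
  apply continuous_quot_lift
  have h1 : Continuous fun p : G.Dart × ↥(Icc (0 : ℝ) 1) => (p.2 : ℝ) :=
    continuous_subtype_val.comp continuous_snd
  have h2 : Continuous fun p : G.Dart × ↥(Icc (0 : ℝ) 1) => F p.1.fst :=
    (continuous_of_discreteTopology (f := fun e : G.Dart => F e.fst)).comp continuous_fst
  have h3 : Continuous fun p : G.Dart × ↥(Icc (0 : ℝ) 1) => F p.1.snd :=
    (continuous_of_discreteTopology (f := fun e : G.Dart => F e.snd)).comp continuous_fst
  exact ((continuous_const.sub h1).mul h2).add (h1.mul h3)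

/-- The projection of the tree onto the edge `e`. -/
def hE (e : G.Dart) : TreeSpace G → ℝ := lin (sideF e)

theorem continuous_hE (e : G.Dart) : Continuous (hE e) := continuous_lin _

theorem hE_pt (f e : G.Dart) {t : ℝ} (ht : t ∈ Icc (0 : ℝ) 1) :
    hE f (pt e t) = (1 - t) * sideF f e.fst + t * sideF f e.snd := lin_pt _ e ht

theorem hE_zero (f e : G.Dart) : hE f (pt e 0) = sideF f e.fst := by
  rw [hE_pt f e (by simp)]; ring

theorem hE_self (hac : G.IsAcyclic) (e : G.Dart) {t : ℝ} (ht : t ∈ Icc (0 : ℝ) 1) :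
    hE e (pt e t) = t := by
  rw [hE_pt e e ht, sideF_fst hac, sideF_snd]; ring

theorem hE_mem (e : G.Dart) (x : TreeSpace G) : hE e x ∈ Icc (0 : ℝ) 1 := by
  obtain ⟨f, t, ht, rfl⟩ := exists_pt x
  rw [hE_pt e f ht]
  obtain ⟨h0, h1⟩ := ht
  rcases sideF_cases e f.fst with h | h <;> rcases sideF_cases e f.snd with h' | h' <;>
    rw [h, h'] <;> constructor <;> linarith

theorem hE_symm (hc : G.Connected) (hac : G.IsAcyclic) (e : G.Dart) (x : TreeSpace G) :
    hE e.symm x = 1 - hE e x := by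
  obtain ⟨f, t, ht, rfl⟩ := exists_pt x
  rw [hE_pt _ f ht, hE_pt _ f ht, sideF_symm hc hac, sideF_symm hc hac]
  ring

theorem hE_unique (hac : G.IsAcyclic) (e : G.Dart) {s : ℝ} (h0 : 0 < s) (h1 : s < 1)
    {x : TreeSpace G} (hx : hE e x = s) : x = pt e s := by
  obtain ⟨g, t, ht, rfl⟩ := exists_pt x
  rcases sideF_dart e g with h | h | h
  · subst h
    rw [hE_self hac _ ht] at hx
    rw [hx]
  · subst h
    have ht' : 1 - t ∈ Icc (0 : ℝ) 1 := ⟨by linarith [ht.2], by linarith [ht.1]⟩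
    rw [pt_symm e ht] at hx ⊢
    rw [hE_self hac _ ht'] at hx
    rw [hx]
  · rw [hE_pt e g ht, h] at hx
    rcases sideF_cases e g.snd with h' | h' <;> rw [h'] at hx <;> exfalso <;> linarith

theorem pt_cases (x : TreeSpace G) :
    (∃ (e : G.Dart) (t : ℝ), 0 < t ∧ t < 1 ∧ x = pt e t) ∨ ∃ e : G.Dart, x = pt e 0 := by
  obtain ⟨e, t, ht, rfl⟩ := exists_pt x
  rcases ht.1.eq_or_lt with h | h
  · right
    exact ⟨e, by rw [h]⟩
  · rcases ht.2.eq_or_lt with h' | h'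
    · right
      exact ⟨e.symm, by rw [h', pt_one]⟩
    · left
      exact ⟨e, t, h, h', rfl⟩

theorem exists_hE_pos (hc : G.Connected) (hac : G.IsAcyclic) {a : TreeSpace G} {e : G.Dart}
    (ha : a ≠ pt e 0) : ∃ f : G.Dart, f.fst = e.fst ∧ 0 < hE f a := by
  obtain ⟨g, t, ht, rfl⟩ := exists_pt a
  by_cases h1 : g.fst = e.fst
  · refine ⟨g, h1, ?_⟩
    rw [hE_self hac g ht]
    rcases ht.1.eq_or_lt with h | h
    · exact absurd (by rw [← h]; exact pt_zero h1) ha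
    · exact h
  by_cases h2 : g.snd = e.fst
  · refine ⟨g.symm, h2, ?_⟩
    rw [hE_symm hc hac, hE_self hac g ht]
    rcases ht.2.eq_or_lt with h | h
    · exact absurd (by rw [h, pt_one]; exact pt_zero h2) ha
    · linarith
  obtain ⟨f, hf, hs⟩ := exists_sideF hc (Ne.symm h1)
  refine ⟨f, hf, ?_⟩
  rcases sideF_dart f g with h | h | h
  · exact absurd (h ▸ hf) h1
  · exact absurd (by rw [h]; exact hf) h2
  · rw [hE_pt f g ht, ← h, hs]
    linarith

theorem hE_injective (hc : G.Connected) (hac : G.IsAcyclic) {a b : TreeSpace G}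
    (h : ∀ e, hE e a = hE e b) : a = b := by
  rcases pt_cases a with ⟨e, t, h0, h1, rfl⟩ | ⟨e, rfl⟩
  · have := h e
    rw [hE_self hac e ⟨h0.le, h1.le⟩] at this
    exact (hE_unique hac e h0 h1 this.symm).symm
  · by_contra hne
    obtain ⟨f, hf, hp⟩ := exists_hE_pos hc hac (Ne.symm hne)
    rw [← h f, ← pt_zero hf, hE_self hac f (by simp)] at hp
    exact lt_irrefl _ hp

theorem t2_treeSpace (hc : G.Connected) (hac : G.IsAcyclic) : T2Space (TreeSpace G) := by
  refine T2Space.of_injective_continuous (f := fun (x : TreeSpace G) (e : G.Dart) => hE e x) ?_ ?_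
  · intro a b hab
    exact hE_injective hc hac fun e => congrFun hab e
  · exact continuous_pi fun e => continuous_hE e

/-- The explicit segment. -/
def Ib (a b : TreeSpace G) : Set (TreeSpace G) := {y | ∀ e, hE e y ∈ uIcc (hE e a) (hE e b)}

theorem Ib_comm (a b : TreeSpace G) : Ib a b = Ib b a := by
  ext y
  simp only [Ib, mem_setOf_eq, uIcc_comm]

theorem left_mem_Ib (a b : TreeSpace G) : a ∈ Ib a b := fun _ => left_mem_uIcc
theorem right_mem_Ib (a b : TreeSpace G) : b ∈ Ib a b := fun _ => right_mem_uIcc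

theorem Ib_subset (hc : G.Connected) (hac : G.IsAcyclic) {a b : TreeSpace G}
    {C : Set (TreeSpace G)} (ha : a ∈ C) (hb : b ∈ C) (hC : IsClosed C) (hp : IsPreconnected C) :
    Ib a b ⊆ C := by
  have key : ∀ (e : G.Dart) (s : ℝ), 0 < s → s < 1 → s ∈ uIcc (hE e a) (hE e b) → pt e s ∈ C := by
    intro e s h0 h1 hs
    have h2 : IsPreconnected (hE e '' C) := hp.image _ (continuous_hE e).continuousOn
    have h3 := h2.ordConnected.uIcc_subset (mem_image_of_mem _ ha) (mem_image_of_mem _ hb) hs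
    obtain ⟨c, hcC, hce⟩ := h3
    rw [← hE_unique hac e h0 h1 hce]
    exact hcC
  intro y hy
  rcases pt_cases y with ⟨e, t, h0, h1, rfl⟩ | ⟨e, rfl⟩
  · have := hy e
    rw [hE_self hac e ⟨h0.le, h1.le⟩] at this
    exact key e t h0 h1 this
  · by_cases hya : a = pt e 0
    · rwa [← hya]
    obtain ⟨f, hf, hpos⟩ := exists_hE_pos hc hac hya
    rw [← pt_zero hf] at hy ⊢
    have h1 := hy f
    rw [hE_self hac f (by simp), mem_uIcc] at h1
    have hb0 : hE f b ≤ 0 := by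
      rcases h1 with h | h
      · linarith [h.1]
      · exact h.1
    have hle : hE f a ≤ 1 := (hE_mem f a).2
    have ht : Filter.Tendsto (pt f) (𝓝[>] (0 : ℝ)) (𝓝 (pt f 0)) :=
      ((continuous_pt f).tendsto 0).mono_left nhdsWithin_le_nhds
    refine hC.mem_of_tendsto ht ?_
    filter_upwards [Ioo_mem_nhdsGT hpos] with s hs
    refine key f s hs.1 (hs.2.trans_le hle) ?_
    rw [mem_uIcc]
    right
    exact ⟨by linarith [hs.1], hs.2.le⟩

def Jn (a b : TreeSpace G) : Prop := JoinedIn (Ib a b) a b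

theorem Jn.symm {a b : TreeSpace G} (h : Jn a b) : Jn b a := by
  unfold Jn at *
  rw [Ib_comm]
  exact JoinedIn.symm h

theorem Jn.trans {a w b : TreeSpace G} (h : Jn a w) (h' : Jn w b) (hw : w ∈ Ib a b) : Jn a b := by
  refine JoinedIn.trans (y := w) (JoinedIn.mono h ?_) (JoinedIn.mono h' ?_)
  · intro y hy e
    exact uIcc_subset_uIcc left_mem_uIcc (hw e) (hy e)
  · intro y hy e
    exact uIcc_subset_uIcc (hw e) right_mem_uIcc (hy e)

theorem jn_edge (e : G.Dart) {s t : ℝ} (hs : s ∈ Icc (0 : ℝ) 1) (ht : t ∈ Icc (0 : ℝ) 1) :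
    Jn (pt e s) (pt e t) := by
  have h1 : IsPathConnected (pt e '' uIcc s t) :=
    ((convex_uIcc s t).isPathConnected nonempty_uIcc).image (continuous_pt e)
  have h2 := h1.joinedIn _ (mem_image_of_mem _ (left_mem_uIcc (a := s) (b := t)))
    _ (mem_image_of_mem _ (right_mem_uIcc (a := s) (b := t)))
  refine h2.mono ?_
  rintro _ ⟨r, hr, rfl⟩ f
  have hr1 : r ∈ Icc (0 : ℝ) 1 := by
    have := uIcc_subset_uIcc (a₂ := (0 : ℝ)) (b₂ := 1) (by rwa [uIcc_of_le zero_le_one])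
      (by rwa [uIcc_of_le zero_le_one]) hr
    rwa [uIcc_of_le zero_le_one] at this
  rw [hE_pt f e hs, hE_pt f e ht, hE_pt f e hr1]
  rw [mem_uIcc] at hr ⊢
  rcases sideF_cases f e.fst with h | h <;> rcases sideF_cases f e.snd with h' | h' <;>
    rw [h, h'] <;> rcases hr with hr | hr
  · left; constructor <;> linarith
  · left; constructor <;> linarith
  · left; constructor <;> linarith
  · right; constructor <;> linarith
  · right; constructor <;> linarith
  · left; constructor <;> linarith
  · left; constructor <;> linarith
  · left; constructor <;> linarith

theorem jn_walk (hc : G.Connected) (hac : G.IsAcyclic) {u v : V} (p : G.Walk u v) (hp : p.IsPath) :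
    ∀ e f : G.Dart, e.fst = u → f.fst = v → Jn (pt e 0) (pt f 0) := by
  induction p with
  | nil =>
    intro e f he hf
    rw [pt_zero (he.trans hf.symm)]
    exact JoinedIn.refl (left_mem_Ib _ _)
  | @cons u w v huw p ih =>
    intro e f he hf
    rw [SimpleGraph.Walk.cons_isPath_iff] at hp
    set g : G.Dart := ⟨(u, w), huw⟩ with hg
    have h1 : Jn (pt g.symm 0) (pt f 0) := ih hp.1 _ _ rfl hf
    have h2 : Jn (pt e 0) (pt g.symm 0) := by
      rw [pt_zero (e := e) (f := g) he, ← pt_one]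
      exact jn_edge g (by simp) (by simp)
    refine h2.trans h1 fun k => ?_
    have hv : sideF g v = 1 := sideF_path huw p hp.2
    rw [hE_zero, hE_zero, hE_zero, he, hf]
    have e1 : g.symm.fst = w := rfl
    rw [e1]
    rcases sideF_dart k g with h | h | h
    · rw [← h, hv]
      have : sideF g w = 1 := sideF_snd g
      rw [this]
      exact right_mem_uIcc
    · have hk : k = g.symm := by rw [h, SimpleGraph.Dart.symm_symm]
      have : sideF g w = 1 := sideF_snd g
      rw [hk, sideF_symm hc hac g w, sideF_symm hc hac g v, hv, this]
      exact right_mem_uIcc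
    · have h' : sideF k u = sideF k w := h
      rw [h']
      exact left_mem_uIcc

theorem jn_general (hc : G.Connected) (hac : G.IsAcyclic) {a : TreeSpace G}
    (ha : ∀ e : G.Dart, Jn a (pt e 0)) (b : TreeSpace G) : Jn a b := by
  have key : ∀ (f : G.Dart) (t : ℝ), t ∈ Icc (0 : ℝ) 1 → hE f a = 0 → Jn a (pt f t) := by
    intro f t ht hf
    refine (ha f).trans (jn_edge f (by simp) ht) fun k => ?_
    rcases sideF_dart k f with h | h | h
    · subst h
      have h0 : hE f (pt f 0) = 0 := hE_self hac f (by simp)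
      rw [hf, h0]
      exact left_mem_uIcc
    · have hk : k = f.symm := by rw [h, SimpleGraph.Dart.symm_symm]
      subst hk
      have h0 : hE f (pt f 0) = 0 := hE_self hac f (by simp)
      rw [hE_symm hc hac f (pt f 0), hE_symm hc hac f a, hf, h0]
      exact left_mem_uIcc
    · have : hE k (pt f 0) = hE k (pt f t) := by
        rw [hE_zero, hE_pt k f ht, ← h]; ring
      rw [this]
      exact right_mem_uIcc
  obtain ⟨f, t, ht, rfl⟩ := exists_pt b
  have hm := hE_mem f a
  rcases hm.1.eq_or_lt with h | h
  · exact key f t ht h.symm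
  rcases hm.2.eq_or_lt with h' | h'
  · have ht' : 1 - t ∈ Icc (0 : ℝ) 1 := ⟨by linarith [ht.2], by linarith [ht.1]⟩
    have := key f.symm (1 - t) ht' (by rw [hE_symm hc hac, h']; ring)
    rw [pt_symm f ht'] at this
    simpa using this
  · have := hE_unique hac f h h' rfl
    rw [this]
    exact jn_edge f hm ht

theorem jn_all (hc : G.Connected) (hac : G.IsAcyclic) (a b : TreeSpace G) : Jn a b := by
  have h1 : ∀ e f : G.Dart, Jn (pt e 0) (pt f 0) := by
    intro e f
    obtain ⟨p, hp⟩ := hc.exists_isPath e.fst f.fst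
    exact jn_walk hc hac p hp e f rfl rfl
  exact jn_general hc hac (fun e => (jn_general hc hac (h1 e) a).symm) b

theorem tseg_eq (hc : G.Connected) (hac : G.IsAcyclic) (a b : TreeSpace G) :
    tseg a b = Ib a b := by
  have hT := t2_treeSpace hc hac
  apply Subset.antisymm
  · obtain ⟨γ, hγ⟩ := jn_all hc hac a b
    have ha : a ∈ range γ := ⟨0, γ.source⟩
    have hb : b ∈ range γ := ⟨1, γ.target⟩
    exact (tseg_min ha hb (isCompact_range γ.continuous).isClosed
      (isPreconnected_range γ.continuous)).trans (range_subset_iff.2 hγ)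
  · exact fun y hy C hC => Ib_subset hc hac (hC.1 (by simp)) (hC.1 (by simp)) hC.2.1 hC.2.2 hy

theorem compact_treeSpace [Finite G.Dart] : CompactSpace (TreeSpace G) := by
  unfold TreeSpace
  exact Quot.compactSpace

theorem locConn_treeSpace : LocallyConnectedSpace (TreeSpace G) := by
  have h1 : LocallyPathConnectedSpace ↥(Icc (0 : ℝ) 1) := (convex_Icc 0 1).locallyPathConnectedSpace
  have h2 : LocallyConnectedSpace ↥(Icc (0 : ℝ) 1) := inferInstance
  have h3 : LocallyConnectedSpace G.Dart := inferInstance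
  have h4 : LocallyConnectedSpace (G.Dart × ↥(Icc (0 : ℝ) 1)) := inferInstance
  exact (isQuotientMap_quot_mk (r := treeRel G)).isCoinducing.locallyConnectedSpace

theorem dendHyp (hc : G.Connected) (hac : G.IsAcyclic) [Finite G.Dart] :
    DendHyp (TreeSpace G) where
  nb := by
    intro p U hU
    have hT := t2_treeSpace hc hac
    have hK := compact_treeSpace (G := G)
    have hL := locConn_treeSpace (G := G)
    obtain ⟨W, hW, hWc, hWU⟩ := exists_mem_nhds_isClosed_subset hU
    obtain ⟨B, hB, hBp, hBW⟩ := locallyConnectedSpace_iff_connected_subsets.1 hL p W hW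
    exact ⟨closure B, Filter.mem_of_superset hB subset_closure,
      (closure_minimal hBW hWc).trans hWU, isClosed_closure, hBp.closure⟩
  joined a b := by
    rw [tseg_eq hc hac]
    exact jn_all hc hac a b
  anti a b y := by
    rw [tseg_eq hc hac, tseg_eq hc hac]
    intro hy ha
    refine hE_injective hc hac fun e => ?_
    have h1 := hy e
    have h2 := ha e
    rw [mem_uIcc] at h1 h2
    rcases h1 with h1 | h1 <;> rcases h2 with h2 | h2 <;> linarith

theorem triple_mem (hc : G.Connected) (hac : G.IsAcyclic) {e f : G.Dart} (hef : e.fst = f.fst)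
    (hne : e ≠ f) : pt e 0 ∈ tseg (pt e 1) (pt f 1) := by
  rw [tseg_eq hc hac]
  intro k
  by_cases h : sideF k e.fst = sideF k e.snd
  · have : hE k (pt e 0) = hE k (pt e 1) := by
      rw [hE_pt k e (by simp), hE_pt k e (by simp), h]; ring
    rw [this]
    exact left_mem_uIcc
  · have h' : sideF k f.fst = sideF k f.snd := by
      have he : e = k ∨ e = k.symm := by
        rcases sideF_dart k e with h1 | h1 | h1
        · exact Or.inl h1
        · exact Or.inr h1
        · exact absurd h1 h
      rcases sideF_dart k f with h1 | h1 | h1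
      · exfalso
        rcases he with he | he
        · exact hne (he.trans h1.symm)
        · rw [he, h1] at hef
          exact k.adj.ne hef.symm
      · exfalso
        rcases he with he | he
        · rw [he, h1] at hef
          exact k.adj.ne hef
        · exact hne (he.trans h1.symm)
      · exact h1
    have : hE k (pt e 0) = hE k (pt f 1) := by
      rw [pt_zero hef, hE_pt k f (by simp), hE_pt k f (by simp), h']; ring
    rw [this]
    exact right_mem_uIcc

theorem exists_isTriple (hc : G.Connected) (hac : G.IsAcyclic)
    (hb : ∃ v : V, 3 ≤ Nat.card ↥(G.neighborSet v)) : ∃ b : TreeSpace G, IsTriple b := by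
  obtain ⟨v, hv⟩ := hb
  have hfin : (G.neighborSet v).Finite := by
    by_contra h
    have : Nat.card ↥(G.neighborSet v) = 0 := Set.Infinite.ncard h
    omega
  have h2 : 2 < (G.neighborSet v).ncard := hv
  obtain ⟨a, b, c, ha, hb, hc', hab, hac', hbc⟩ := (Set.two_lt_ncard_iff hfin).1 h2
  have hne : ∀ {x y : V} (hx : G.Adj v x) (hy : G.Adj v y), x ≠ y →
      (⟨(v, x), hx⟩ : G.Dart) ≠ ⟨(v, y), hy⟩ := by
    intro x y hx hy hxy h
    exact hxy (congrArg (fun k : G.Dart => k.snd) h)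
  have hend : ∀ {x y : V} (hx : G.Adj v x) (hy : G.Adj v y),
      pt (⟨(v, x), hx⟩ : G.Dart) 1 ≠ pt (⟨(v, y), hy⟩ : G.Dart) 0 := by
    intro x y hx hy h
    rw [pt_zero (e := ⟨(v, y), hy⟩) (f := ⟨(v, x), hx⟩) rfl] at h
    have := congrArg (hE (⟨(v, x), hx⟩ : G.Dart)) h
    rw [hE_self hac _ (by simp), hE_self hac _ (by simp)] at this
    norm_num at this
  refine ⟨pt ⟨(v, a), ha⟩ 0, pt ⟨(v, a), ha⟩ 1, pt ⟨(v, b), hb⟩ 1, pt ⟨(v, c), hc'⟩ 1,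
    hend _ _, hend _ _, hend _ _, ?_, ?_, ?_⟩
  · exact triple_mem hc hac rfl (hne _ _ hab)
  · exact triple_mem hc hac rfl (hne _ _ hac')
  · rw [pt_zero (e := ⟨(v, a), ha⟩) (f := ⟨(v, b), hb⟩) rfl]
    exact triple_mem hc hac rfl (hne _ _ hbc)

end Geo

/-! ### Part 4: merge trees -/

section Merge

open Set Function

namespace MergeTreeData

variable (d : MergeTreeData)

theorem desc_refl (v : Fin d.n) : d.Desc v v := ⟨0, rfl⟩

theorem desc_trans {u v w : Fin d.n} (h : d.Desc u v) (h' : d.Desc v w) : d.Desc u w := by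
  obtain ⟨k, rfl⟩ := h
  obtain ⟨m, rfl⟩ := h'
  exact ⟨m + k, by rw [iterate_add_apply]⟩

theorem desc_chain {u v w : Fin d.n} (h : d.Desc u v) (h' : d.Desc u w) :
    d.Desc v w ∨ d.Desc w v := by
  obtain ⟨k, rfl⟩ := h
  obtain ⟨m, rfl⟩ := h'
  rcases le_total k m with hkm | hkm
  · left
    refine ⟨m - k, ?_⟩
    rw [← iterate_add_apply, Nat.sub_add_cancel hkm]
  · right
    refine ⟨k - m, ?_⟩
    rw [← iterate_add_apply, Nat.sub_add_cancel hkm]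

theorem desc_leaf {v w : Fin d.n} (hw : d.IsLeafNode w) (h : d.Desc v w) : v = w := by
  obtain ⟨k, hk⟩ := h
  induction k with
  | zero => exact hk
  | succ k ih =>
    rw [iterate_succ_apply'] at hk
    exact ih (hw _ hk)

theorem desc_root (v : Fin d.n) : d.Desc v d.root := d.hreach v

/-- A proper descendant of `c` lies below a proper child of `c`. -/
theorem desc_child {v c : Fin d.n} (h : d.Desc v c) (hne : v ≠ c) :
    ∃ w, d.parent w = c ∧ w ≠ c ∧ d.Desc v w := by
  obtain ⟨k, hk⟩ := h
  induction k with
  | zero => exact absurd hk hne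
  | succ k ih =>
    by_cases hc : d.parent^[k] v = c
    · exact ih hc
    · rw [iterate_succ_apply'] at hk
      exact ⟨_, hk, hc, k, rfl⟩

theorem val_child {w c : Fin d.n} (h : d.parent w = c) (hne : w ≠ c) : d.val w < d.val c := by
  have : w ≠ d.root := by
    rintro rfl
    exact hne (d.hroot.symm.trans h)
  rw [← h]
  exact d.hval w this

instance : Finite d.Leaf := by
  unfold Leaf; infer_instance

theorem leaf_nonempty : Nonempty d.Leaf := by
  haveI : Nonempty (Fin d.n) := ⟨d.root⟩
  obtain ⟨v, hv⟩ := Finite.exists_min d.val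
  refine ⟨⟨v, fun w hw => ?_⟩⟩
  by_contra hne
  exact absurd (d.val_child hw hne) (not_lt.2 (hv w))

theorem nodeHyp (hgen : d.Generic) : NodeHyp d.Desc (fun l : d.Leaf => l.1) where
  refl := d.desc_refl
  trans _ _ _ := d.desc_trans
  chain _ _ _ := d.desc_chain
  leaves l l' h := Subtype.ext (d.desc_leaf l'.2 h)
  cherry := by
    intro S hS
    set D : Fin d.n → Set d.Leaf := fun v => {l | l ∈ S ∧ d.Desc l.1 v} with hD
    have hroot : ¬ (D d.root).Subsingleton := by
      intro h
      exact hS fun a ha b hb => h ⟨ha, d.desc_root _⟩ ⟨hb, d.desc_root _⟩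
    obtain ⟨⟨c, hc⟩, hmin⟩ :
        ∃ c : {v : Fin d.n // ¬ (D v).Subsingleton}, ∀ v : {v : Fin d.n // ¬ (D v).Subsingleton},
          d.val c.1 ≤ d.val v.1 := by
      haveI : Nonempty {v : Fin d.n // ¬ (D v).Subsingleton} := ⟨⟨d.root, hroot⟩⟩
      exact Finite.exists_min fun v : {v : Fin d.n // ¬ (D v).Subsingleton} => d.val v.1
    have hsub : ∀ w, d.parent w = c → w ≠ c → (D w).Subsingleton := by
      intro w hw hne
      by_contra hcon
      exact absurd (d.val_child hw hne) (not_lt.2 (hmin ⟨w, hcon⟩))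
    obtain ⟨l₁, h1, l₂, h2, hne⟩ := Set.not_subsingleton_iff.1 hc
    have hnot : ∀ l ∈ D c, l.1 ≠ c := by
      intro l hl hlc
      apply hc
      have hleaf : d.IsLeafNode c := hlc ▸ l.2
      intro a ha b hb
      exact Subtype.ext ((d.desc_leaf hleaf ha.2).trans (d.desc_leaf hleaf hb.2).symm)
    refine ⟨c, l₁, l₂, hne, fun l => ⟨fun hl => ?_, ?_⟩⟩
    · by_contra hcon
      rw [not_or] at hcon
      obtain ⟨w, hw, hwc, hlw⟩ := d.desc_child hl.2 (hnot l hl)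
      obtain ⟨w₁, hw₁, hwc₁, hlw₁⟩ := d.desc_child h1.2 (hnot l₁ h1)
      obtain ⟨w₂, hw₂, hwc₂, hlw₂⟩ := d.desc_child h2.2 (hnot l₂ h2)
      have n1 : w ≠ w₁ := by
        rintro rfl
        exact hcon.1 (hsub w hw hwc ⟨hl.1, hlw⟩ ⟨h1.1, hlw₁⟩)
      have n2 : w ≠ w₂ := by
        rintro rfl
        exact hcon.2 (hsub w hw hwc ⟨hl.1, hlw⟩ ⟨h2.1, hlw₂⟩)
      have n3 : w₁ ≠ w₂ := by
        rintro rfl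
        exact hne (hsub w₁ hw₁ hwc₁ ⟨h1.1, hlw₁⟩ ⟨h2.1, hlw₂⟩)
      have h3 : 2 < ({w : Fin d.n | d.parent w = c ∧ w ≠ c} : Set (Fin d.n)).ncard :=
        (Set.two_lt_ncard_iff (toFinite _)).2
          ⟨w, w₁, w₂, ⟨hw, hwc⟩, ⟨hw₁, hwc₁⟩, ⟨hw₂, hwc₂⟩, n1, n2, n3⟩
      have h4 : Nat.card {w : Fin d.n // d.parent w = c ∧ w ≠ c} =
        ({w : Fin d.n | d.parent w = c ∧ w ≠ c} : Set (Fin d.n)).ncard := rfl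
      rcases hgen.1 c with h | h <;> omega
    · rintro (rfl | rfl)
      · exact h1
      · exact h2

end MergeTreeData

theorem hullOf_eq {X : Type*} [TopologicalSpace X] (d : MergeTreeData) (x : d.Leaf → X)
    (v : Fin d.n) :
    hullOf d (fun l => ({x l} : Set X)) v = hl d.Desc (fun l : d.Leaf => l.1) x univ v := by
  unfold hullOf hl
  congr 1
  ext y
  simp only [mem_iUnion, mem_image, dn, mem_univ, true_and, mem_setOf_eq]
  constructor
  · rintro ⟨l, hl⟩
    by_cases h : d.Desc l.1 v
    · rw [if_pos h] at hl
      exact ⟨l, h, hl.symm⟩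
    · rw [if_neg h] at hl
      exact absurd hl (notMem_empty _)
  · rintro ⟨l, h, rfl⟩
    exact ⟨l, by rw [if_pos h]; rfl⟩

theorem confCond_iff {X : Type*} [TopologicalSpace X] (d : MergeTreeData) (hgen : d.Generic) :
    {x : d.Leaf → X | ConfCond d x} = CK X d.Desc (fun l : d.Leaf => l.1) univ := by
  ext x
  constructor
  · intro h v w hvw
    rw [Set.disjoint_iff_inter_eq_empty, ← Set.not_nonempty_iff_eq_empty, ← hullOf_eq,
      ← hullOf_eq]
    intro hne
    rcases h.2 v w hne with h' | h'
    · exact hvw.1 h'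
    · exact hvw.2 h'
  · intro h
    refine ⟨?_, ?_⟩
    · intro a b hab
      by_contra hne
      have hT := d.nodeHyp hgen
      have h1 : inc d.Desc a.1 b.1 :=
        ⟨fun h' => hne (hT.leaves _ _ h'), fun h' => hne (hT.leaves _ _ h').symm⟩
      have := h _ _ h1
      have ha : x a ∈ hl d.Desc (fun l : d.Leaf => l.1) x univ a.1 :=
        subset_ConvH _ ⟨a, ⟨mem_univ _, d.desc_refl _⟩, rfl⟩
      exact Set.disjoint_left.1 this ha
        (subset_ConvH _ ⟨b, ⟨mem_univ _, d.desc_refl _⟩, hab.symm⟩)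
    · intro v w hne
      by_contra hcon
      rw [not_or] at hcon
      have := h v w hcon
      rw [hullOf_eq, hullOf_eq] at hne
      exact (Set.not_disjoint_iff_nonempty_inter.2 hne) this

end Merge

/-- For a geometric tree `X` with a branch point (a vertex of degree at least 3) and a
generic cellular merge tree `T`, the constrained configuration space `Conf(X,T)` is
nonempty and path-connected. -/
theorem stmt17 {V : Type} [Fintype V] (G : SimpleGraph V)
    (hconn : G.Connected) (hacyc : G.IsAcyclic)
    (hbranch : ∃ v : V, 3 ≤ Nat.card ↥(G.neighborSet v))
    (d : MergeTreeData) (hgen : d.Generic) :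
    {x : d.Leaf → TreeSpace G | ConfCond d x}.Nonempty ∧
    IsPathConnected {x : d.Leaf → TreeSpace G | ConfCond d x} := by
  obtain ⟨b, hb⟩ := exists_isTriple hconn hacyc hbranch
  haveI := t2_treeSpace hconn hacyc
  haveI := compact_treeSpace (G := G)
  have h := (dendHyp hconn hacyc).CK_isPathConnected (d.nodeHyp hgen) hb d.leaf_nonempty
  rw [← confCond_iff d hgen] at h
  exact ⟨h.nonempty, h⟩
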